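/- arXiv:1408.4709 — 2 statements merged into one kernel-verified Lean document; each statement's English description precedes it below -/
import Mathlib

section
/- Let G be a finite group, H a normal subgroup, and ρ = ρ₁ ⊗ ρ₂ a tensor product representation of G over ℂ, where ρ₁ and ρ₂ are (projective) representations of G such that ρ₂(h) = 1 for all h ∈ H, the restriction of ρ₁ to H is an irreducible representation of H, and ρ₂ is irreducible. Then ρ is an irreducible representation of G. -/
open TensorProduct

/-!
A nonzero vector and its finite `H`-orbit span `M₁`, so by Schur's lemma only scalars commute with
`ρ₁(H)`. By the Jacobson density theorem every endomorphism of `M₁` agrees on any finite set with an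
element of the algebra generated by `ρ₁(H)`. Let `W` be a nonzero subspace of `M₁ ⊗ M₂` invariant
under all `ρ₁ g ⊗ ρ₂ g`. As `ρ₂` is trivial on `H`, `W` is invariant under `T ⊗ 1` for every
endomorphism `T` of `M₁`. Rank-one `T` then show that `K = {y | ∀ x, x ⊗ y ∈ W}` contains every
contraction of an element of `W`, so `K ≠ 0`. For `y ∈ K` and `x` with `ρ₁ g x ≠ 0`, contracting
`ρ₁ g x ⊗ ρ₂ g y ∈ W` gives `ρ₂ g y ∈ K`. Hence `K = M₂`, that is, `W = M₁ ⊗ M₂`.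
-/

/-- A set of endomorphisms of `V` acts irreducibly if `V` is nonzero and has no proper nonzero
submodule stable under the set. The set need not be closed under composition, so that the image of
a projective representation is covered. -/
def ActsIrreducibly {R V : Type*} [Semiring R] [AddCommMonoid V] [Module R V]
    (S : Set (Module.End R V)) : Prop :=
  (⊥ : Submodule R V) ≠ ⊤ ∧
    ∀ W : Submodule R V, (∀ T ∈ S, ∀ w ∈ W, T w ∈ W) → W = ⊥ ∨ W = ⊤

section Families

variable {ι R V : Type*} [Semiring R] [AddCommMonoid V] [Module R V] {ρ : ι → Module.End R V}

theorem actsIrreducibly_image_iff {s : Set ι} :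
    ActsIrreducibly (ρ '' s) ↔ (⊥ : Submodule R V) ≠ ⊤ ∧
      ∀ W : Submodule R V, (∀ i ∈ s, ∀ w ∈ W, ρ i w ∈ W) → W = ⊥ ∨ W = ⊤ := by
  simp [ActsIrreducibly]

theorem actsIrreducibly_range_iff :
    ActsIrreducibly (Set.range ρ) ↔ (⊥ : Submodule R V) ≠ ⊤ ∧
      ∀ W : Submodule R V, (∀ i, ∀ w ∈ W, ρ i w ∈ W) → W = ⊥ ∨ W = ⊤ := by
  simp [ActsIrreducibly]

end Families

namespace ActsIrreducibly

theorem nontrivial {R V : Type*} [Semiring R] [AddCommMonoid V] [Module R V]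
    {S : Set (Module.End R V)} (hS : ActsIrreducibly S) : Nontrivial V :=
  (Submodule.nontrivial_iff R).1 ⟨_, _, hS.1⟩

theorem moduleFinite {R V : Type*} [Semiring R] [AddCommMonoid V] [Module R V]
    {S : Set (Module.End R V)} (hS : ActsIrreducibly S) (hfin : S.Finite)
    (hmul : ∀ T ∈ S, ∀ T' ∈ S, T * T' ∈ S) : Module.Finite R V := by
  have := hS.nontrivial
  obtain ⟨v, hv⟩ := exists_ne (0 : V)
  let orbit : Set V := insert v ((fun T ↦ T v) '' S)
  have orbit_invariant : ∀ T ∈ S, ∀ w ∈ Submodule.span R orbit, T w ∈ Submodule.span R orbit := by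
    intro T hT
    change Submodule.span R orbit ≤ (Submodule.span R orbit).comap T
    rw [Submodule.span_le]
    rintro _ (rfl | ⟨T', hT', rfl⟩)
    · exact Submodule.subset_span (.inr ⟨T, hT, rfl⟩)
    · exact Submodule.subset_span (.inr ⟨T * T', hmul T hT T' hT', rfl⟩)
  have span_ne_bot : Submodule.span R orbit ≠ ⊥ :=
    (Submodule.ne_bot_iff _).2 ⟨v, Submodule.subset_span (.inl rfl), hv⟩
  have span_eq_top := (hS.2 _ orbit_invariant).resolve_left span_ne_bot
  exact ⟨span_eq_top ▸ Submodule.fg_span ((hfin.image _).insert v)⟩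

theorem isSimpleModule_adjoin {R V : Type*} [CommRing R] [AddCommGroup V] [Module R V]
    {S : Set (Module.End R V)} (hS : ActsIrreducibly S) :
    IsSimpleModule (Algebra.adjoin R S) V := by
  have := hS.nontrivial
  refine (isSimpleModule_iff _ _).2 ⟨fun U ↦ ?_⟩
  have U_invariant : ∀ T ∈ S, ∀ u ∈ U.restrictScalars R, T u ∈ U.restrictScalars R :=
    fun T hT _ hu ↦ U.smul_mem (⟨T, Algebra.subset_adjoin hT⟩ : Algebra.adjoin R S) hu
  simpa using hS.2 _ U_invariant

theorem centralizer_eq_bot {k V : Type*} [Field k] [IsAlgClosed k] [AddCommGroup V] [Module k V]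
    [FiniteDimensional k V] {S : Set (Module.End k V)} (hS : ActsIrreducibly S) :
    Subalgebra.centralizer k S = ⊥ := by
  have := hS.nontrivial
  refine eq_bot_iff.2 fun T hT ↦ ?_
  obtain ⟨c, hc⟩ := Module.End.exists_eigenvalue T
  have eigenspace_eq_top : T.eigenspace c = ⊤ :=
    (hS.2 _ fun T' hT' _ hw ↦ Module.End.mapsTo_genEigenspace_of_comm
      (Subalgebra.mem_centralizer_iff k |>.1 hT T' hT').symm c 1 hw).resolve_left hc
  refine Algebra.mem_bot.2 ⟨c, LinearMap.ext fun v ↦ ?_⟩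
  exact (Module.End.mem_eigenspace_iff.1 (eigenspace_eq_top ▸ Submodule.mem_top)).symm

theorem exists_mem_adjoin_eqOn {R V : Type*} [CommRing R] [AddCommGroup V] [Module R V]
    {S : Set (Module.End R V)} (hS : ActsIrreducibly S)
    (hcent : Subalgebra.centralizer R S = ⊥) (T : Module.End R V) (s : Finset V) :
    ∃ a ∈ Algebra.adjoin R S, Set.EqOn T a s := by
  have := hS.isSimpleModule_adjoin
  have end_scalar (φ : Module.End (Algebra.adjoin R S) V) : ∃ c : R, ∀ v, φ v = c • v := by
    have φ_mem : φ.restrictScalars R ∈ Subalgebra.centralizer R S :=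
      Subalgebra.mem_centralizer_iff R |>.2 fun a ha ↦ LinearMap.ext fun v ↦
        (φ.map_smul (⟨a, Algebra.subset_adjoin ha⟩ : Algebra.adjoin R S) v).symm
    obtain ⟨c, hc⟩ := Algebra.mem_bot.1 (hcent ▸ φ_mem)
    exact ⟨c, fun v ↦ congr($hc v).symm⟩
  let T' : Module.End (Module.End (Algebra.adjoin R S) V) V :=
    { T with
      map_smul' := fun φ v ↦ by
        obtain ⟨c, hc⟩ := end_scalar φ
        simp [Module.End.smul_def, hc] }
  obtain ⟨a, ha⟩ := jacobson_density T' s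
  exact ⟨a, a.2, ha⟩

end ActsIrreducibly

section RightFactor

variable {R M N : Type*} [CommSemiring R] [AddCommMonoid M] [AddCommMonoid N]
  [Module R M] [Module R N]

/-- The largest submodule `K` of `N` with `M ⊗ K ⊆ W`. -/
def rightFactor (W : Submodule R (M ⊗[R] N)) : Submodule R N :=
  ⨅ x : M, W.comap (TensorProduct.mk R M N x)

theorem mem_rightFactor {W : Submodule R (M ⊗[R] N)} {y : N} :
    y ∈ rightFactor W ↔ ∀ x : M, x ⊗ₜ[R] y ∈ W := by
  simp [rightFactor]

theorem eq_top_of_rightFactor_eq_top {W : Submodule R (M ⊗[R] N)} (hW : rightFactor W = ⊤) :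
    W = ⊤ := by
  rw [eq_top_iff, ← TensorProduct.span_tmul_eq_top, Submodule.span_le]
  rintro _ ⟨x, y, rfl⟩
  exact mem_rightFactor.1 (hW ▸ Submodule.mem_top) x

theorem rTensor_smulRight_apply (f : Module.Dual R M) (x : M) (w : M ⊗[R] N) :
    (f.smulRight x).rTensor N w = x ⊗ₜ[R] TensorProduct.lid R N (f.rTensor N w) := by
  induction w with
  | zero => simp
  | tmul x' y => simp [TensorProduct.smul_tmul]
  | add w w' hw hw' => simp only [map_add, TensorProduct.tmul_add, hw, hw']

theorem contraction_mem_rightFactor {W : Submodule R (M ⊗[R] N)}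
    (hW : ∀ T : Module.End R M, ∀ w ∈ W, T.rTensor N w ∈ W) (f : Module.Dual R M)
    {w : M ⊗[R] N} (hw : w ∈ W) :
    TensorProduct.lid R N (f.rTensor N w) ∈ rightFactor W :=
  mem_rightFactor.2 fun x ↦ rTensor_smulRight_apply f x w ▸ hW _ w hw

theorem eq_bot_of_rightFactor_eq_bot [Module.Free R M] {W : Submodule R (M ⊗[R] N)}
    (hW : ∀ T : Module.End R M, ∀ w ∈ W, T.rTensor N w ∈ W) (hbot : rightFactor W = ⊥) :
    W = ⊥ := by
  classical
  let b := Module.Free.chooseBasis R M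
  refine (Submodule.eq_bot_iff W).2 fun w hw ↦ ?_
  have coeff_eq_zero (i) : TensorProduct.equivFinsuppOfBasisLeft b w i = 0 := by
    rw [TensorProduct.equivFinsuppOfBasisLeft_apply, ← Submodule.mem_bot R, ← hbot]
    exact contraction_mem_rightFactor hW (b.coord i) hw
  exact (TensorProduct.equivFinsuppOfBasisLeft b).map_eq_zero_iff.1 (Finsupp.ext coeff_eq_zero)

theorem rTensor_apply_mem_of_mem_adjoin {S : Set (Module.End R M)} {W : Submodule R (M ⊗[R] N)}
    (hW : ∀ T ∈ S, ∀ w ∈ W, T.rTensor N w ∈ W) {a : Module.End R M}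
    (ha : a ∈ Algebra.adjoin R S) : ∀ w ∈ W, a.rTensor N w ∈ W := by
  induction ha using Algebra.adjoin_induction with
  | mem T hT => exact hW T hT
  | algebraMap r =>
    intro w hw
    simpa [Algebra.algebraMap_eq_smul_one, Module.End.one_eq_id] using W.smul_mem r hw
  | add T T' _ _ hT hT' =>
    intro w hw
    simpa using W.add_mem (hT w hw) (hT' w hw)
  | mul T T' _ _ hT hT' =>
    intro w hw
    simpa [LinearMap.rTensor_mul] using hT _ (hT' w hw)

end RightFactor

theorem mem_rightFactor_of_tmul_mem {k M N : Type*} [Field k] [AddCommGroup M] [Module k M]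
    [AddCommGroup N] [Module k N] {W : Submodule k (M ⊗[k] N)}
    (hW : ∀ T : Module.End k M, ∀ w ∈ W, T.rTensor N w ∈ W) {x : M} {y : N} (hx : x ≠ 0)
    (hxy : x ⊗ₜ[k] y ∈ W) : y ∈ rightFactor W := by
  obtain ⟨f, hf⟩ := Module.Projective.exists_dual_eq_one k hx
  simpa [hf] using contraction_mem_rightFactor hW f hxy

theorem ActsIrreducibly.rTensor_apply_mem {R M N : Type*} [CommRing R] [AddCommGroup M]
    [Module R M] [AddCommGroup N] [Module R N] {S : Set (Module.End R M)}
    (hS : ActsIrreducibly S) (hcent : Subalgebra.centralizer R S = ⊥)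
    {W : Submodule R (M ⊗[R] N)} (hW : ∀ T ∈ S, ∀ w ∈ W, T.rTensor N w ∈ W)
    (T : Module.End R M) : ∀ w ∈ W, T.rTensor N w ∈ W := by
  classical
  intro w hw
  obtain ⟨s, rfl⟩ := TensorProduct.exists_finset w
  obtain ⟨a, ha, hTa⟩ := hS.exists_mem_adjoin_eqOn hcent T (s.image Prod.fst)
  have rTensor_eq : T.rTensor N (∑ p ∈ s, p.1 ⊗ₜ[R] p.2) =
      a.rTensor N (∑ p ∈ s, p.1 ⊗ₜ[R] p.2) := by
    simp only [map_sum, LinearMap.rTensor_tmul]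
    refine Finset.sum_congr rfl fun p hp ↦ ?_
    rw [hTa (Finset.mem_image_of_mem Prod.fst hp)]
  exact rTensor_eq ▸ rTensor_apply_mem_of_mem_adjoin hW ha _ hw

theorem left_ne_zero_of_map_multiplicative {R G M₁ M₂ : Type*} [CommSemiring R] [Group G]
    [AddCommMonoid M₁] [Module R M₁] [AddCommMonoid M₂] [Module R M₂] [Nontrivial (M₁ ⊗[R] M₂)]
    {ρ₁ : G → Module.End R M₁} {ρ₂ : G → Module.End R M₂}
    (hone : TensorProduct.map (ρ₁ 1) (ρ₂ 1) = LinearMap.id)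
    (hmul : ∀ g g' : G, TensorProduct.map (ρ₁ (g * g')) (ρ₂ (g * g')) =
      TensorProduct.map (ρ₁ g) (ρ₂ g) ∘ₗ TensorProduct.map (ρ₁ g') (ρ₂ g')) (g : G) :
    ρ₁ g ≠ 0 := by
  intro hg
  have id_eq_zero := hmul g g⁻¹
  rw [mul_inv_cancel, hone, hg, TensorProduct.map_zero_left, LinearMap.zero_comp] at id_eq_zero
  exact one_ne_zero (α := Module.End R (M₁ ⊗[R] M₂)) id_eq_zero

theorem stmt_3_general {k G M₁ M₂ : Type*} [Field k] [AddCommGroup M₁] [Module k M₁]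
    [AddCommGroup M₂] [Module k M₂] (H : Set G)
    (ρ₁ : G → Module.End k M₁) (ρ₂ : G → Module.End k M₂)
    (hρ₁ : ∀ g, ρ₁ g ≠ 0) (hρ₂H : ∀ h ∈ H, ρ₂ h = LinearMap.id)
    (hcent : Subalgebra.centralizer k (ρ₁ '' H) = ⊥)
    (hirr₁ : ActsIrreducibly (ρ₁ '' H)) (hirr₂ : ActsIrreducibly (Set.range ρ₂)) :
    ActsIrreducibly (Set.range fun g ↦ TensorProduct.map (ρ₁ g) (ρ₂ g)) := by
  have := hirr₁.nontrivial
  have := hirr₂.nontrivial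
  refine ⟨bot_ne_top, fun W hW ↦ ?_⟩
  rw [Set.forall_mem_range] at hW
  have W_rTensor_invariant : ∀ T : Module.End k M₁, ∀ w ∈ W, T.rTensor M₂ w ∈ W := by
    refine hirr₁.rTensor_apply_mem hcent (Set.forall_mem_image.2 fun h hh ↦ ?_)
    simpa only [LinearMap.rTensor, hρ₂H h hh] using hW h
  have rightFactor_invariant : ∀ T ∈ Set.range ρ₂, ∀ y ∈ rightFactor W, T y ∈ rightFactor W := by
    rintro _ ⟨g, rfl⟩ y hy
    obtain ⟨x, hx⟩ := DFunLike.ne_iff.1 (hρ₁ g)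
    exact mem_rightFactor_of_tmul_mem W_rTensor_invariant hx
      (hW g _ (mem_rightFactor.1 hy x))
  exact (hirr₂.2 _ rightFactor_invariant).imp
    (eq_bot_of_rightFactor_eq_bot W_rTensor_invariant) eq_top_of_rightFactor_eq_top

/-- Let `G` be a finite group, `H` a normal subgroup and `ρ = ρ₁ ⊗ ρ₂` a tensor product
representation of `G` over `ℂ`, where `ρ₂(h) = 1` for all `h ∈ H`, the restriction of `ρ₁`
to `H` is an irreducible representation of `H`, and `ρ₂` is irreducible.  Then `ρ` is
irreducible. -/
theorem stmt_3 {G : Type*} [Group G] [Fintype G] (H : Subgroup G) [H.Normal]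
    {M₁ M₂ : Type*} [AddCommGroup M₁] [Module ℂ M₁] [AddCommGroup M₂] [Module ℂ M₂]
    (ρ₁ : G → M₁ →ₗ[ℂ] M₁) (ρ₂ : G → M₂ →ₗ[ℂ] M₂)
    -- `ρ := g ↦ ρ₁ g ⊗ ρ₂ g` is a genuine linear representation of `G`:
    (hρ_one : TensorProduct.map (ρ₁ 1) (ρ₂ 1) = LinearMap.id)
    (hρ_mul : ∀ g g' : G,
      TensorProduct.map (ρ₁ (g * g')) (ρ₂ (g * g'))
        = (TensorProduct.map (ρ₁ g) (ρ₂ g)) ∘ₗ (TensorProduct.map (ρ₁ g') (ρ₂ g')))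
    -- `ρ₂` is trivial on `H`:
    (hρ₂H : ∀ h ∈ H, ρ₂ h = LinearMap.id)
    -- the restriction of `ρ₁` to `H` is an irreducible representation of `H`:
    (hρ₁H_mul : ∀ h ∈ H, ∀ h' ∈ H, ρ₁ (h * h') = ρ₁ h ∘ₗ ρ₁ h')
    (hρ₁H_irr : (⊥ : Submodule ℂ M₁) ≠ ⊤ ∧
      ∀ W : Submodule ℂ M₁, (∀ h ∈ H, ∀ w ∈ W, ρ₁ h w ∈ W) → W = ⊥ ∨ W = ⊤)
    -- `ρ₂` is irreducible:
    (hρ₂_irr : (⊥ : Submodule ℂ M₂) ≠ ⊤ ∧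
      ∀ W : Submodule ℂ M₂, (∀ g : G, ∀ w ∈ W, ρ₂ g w ∈ W) → W = ⊥ ∨ W = ⊤) :
    -- then `ρ` is irreducible:
    (⊥ : Submodule ℂ (M₁ ⊗[ℂ] M₂)) ≠ ⊤ ∧
      ∀ W : Submodule ℂ (M₁ ⊗[ℂ] M₂),
        (∀ g : G, ∀ w ∈ W, TensorProduct.map (ρ₁ g) (ρ₂ g) w ∈ W) → W = ⊥ ∨ W = ⊤ := by
  have hirr₁ : ActsIrreducibly (ρ₁ '' H) := actsIrreducibly_image_iff.2 hρ₁H_irr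
  have hirr₂ : ActsIrreducibly (Set.range ρ₂) := actsIrreducibly_range_iff.2 hρ₂_irr
  have := hirr₁.nontrivial
  have := hirr₂.nontrivial
  have : FiniteDimensional ℂ M₁ := hirr₁.moduleFinite (Set.toFinite _) <|
    Set.forall_mem_image.2 fun h hh ↦ Set.forall_mem_image.2 fun h' hh' ↦
      ⟨h * h', H.mul_mem hh hh', hρ₁H_mul h hh h' hh'⟩
  exact actsIrreducibly_range_iff.1 <| stmt_3_general (H : Set G) ρ₁ ρ₂
    (left_ne_zero_of_map_multiplicative hρ_one hρ_mul) hρ₂H hirr₁.centralizer_eq_bot hirr₁ hirr₂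
end

section
/- Let G be a finite group, N ⊴ G, χ an irreducible character of N, and I = I_G(χ) its inertia group. If ψ is an irreducible constituent of the induced character χ↑^I, then ψ↑^G is an irreducible character of G. Moreover, the same conclusion holds with I replaced by any subgroup H of G containing I_G(χ) (for irreducible constituents ψ of χ↑^H lying over χ). -/
/-- The standard inner product `⟨f, g⟩ = (1/|G|) Σ_x f(x)·conj(g(x))` on functions
`G → ℂ`. -/
noncomputable def classInner (G : Type*) [Fintype G] (f g : G → ℂ) : ℂ :=
  (Fintype.card G : ℂ)⁻¹ * ∑ x : G, f x * (starRingEnd ℂ) (g x)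

/-- The character of `G` induced from a function `f` on a subgroup `H ≤ G`:
`(f↑^G)(g) = (1/|H|) Σ_{x ∈ G, x⁻¹gx ∈ H} f(x⁻¹gx)`. -/
noncomputable def indChar {G : Type*} [Group G] [Fintype G] (H : Subgroup G)
    [DecidablePred (· ∈ H)] (f : ↥H → ℂ) : G → ℂ :=
  fun g => (Nat.card H : ℂ)⁻¹ *
    ∑ x : G, if h : x⁻¹ * g * x ∈ H then f ⟨x⁻¹ * g * x, h⟩ else 0

/-- `f` is the character of an irreducible complex representation of `G`. -/
def IsIrrChar (G : Type) [Group G] (f : G → ℂ) : Prop :=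
  ∃ V : FDRep ℂ G, CategoryTheory.Simple V ∧ V.character = f

/-!
Realise `ψ` by `σ : H → GL(W)` and `χ` by `ρ : N → GL(X)`; the induced character is the character of
`coind σ`. An endomorphism `L` of `coind σ` is determined by the maps `w ↦ (L w)(x)`, where `w` is
viewed as a function supported on `H`, and each of these intertwines `σ` with itself along
conjugation by `x`. If all of them vanish for `x ∉ H`, then `L` comes from an endomorphism of `σ`;
hence `coind σ` has only trivial idempotent endomorphisms and, by Maschke, is irreducible (Mackey).

To verify the hypothesis, let `T ≠ 0` intertwine `σ` with itself along conjugation by `x`. As `ψ`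
lies over `χ`, there are nonzero `N`-maps `f : X → W` and `p : W → X`, and irreducibility of `σ`
gives `h, h' ∈ H` with `p ∘ σ h' ∘ T ∘ σ h ∘ f ≠ 0`. By Schur this is an isomorphism of `ρ` with its
conjugate by `h' x h`, so `h' x h` stabilises `χ`, whence `h' x h ∈ H` and `x ∈ H`.
-/

open CategoryTheory Representation

section Irreducibility

lemma isSimpleModule_of_idempotents_trivial {R M : Type*} [Ring R] [AddCommGroup M] [Module R M]
    [IsSemisimpleModule R M] [Nontrivial M]
    (h : ∀ e : Module.End R M, IsIdempotentElem e → e = 0 ∨ e = 1) : IsSimpleModule R M := by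
  rw [isSimpleModule_iff]
  refine ⟨fun p ↦ ?_⟩
  obtain ⟨q, hpq⟩ := exists_isCompl p
  rcases h _ (Submodule.isIdempotentElem_projection hpq) with h0 | h1
  · left
    rw [← Submodule.range_projection hpq, h0, LinearMap.range_zero]
  · right
    rw [← Submodule.range_projection hpq, h1]
    exact LinearMap.range_id

variable {k G V : Type*} [Field k] [AddCommGroup V] [Module k V]

lemma isIrreducible_of_idempotents_trivial [Monoid G] {ρ : Representation k G V}
    [IsSemisimpleRepresentation ρ] [Nontrivial V]
    (h : ∀ e : IntertwiningMap ρ ρ, IsIdempotentElem e → e = 0 ∨ e = 1) : IsIrreducible ρ := by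
  rw [irreducible_iff_isSimpleModule_asModule]
  have := (isSemisimpleRepresentation_iff_isSemisimpleModule_asModule ρ).1 ‹_›
  have : Nontrivial ρ.asModule := ‹Nontrivial V›
  refine isSimpleModule_of_idempotents_trivial fun e he ↦ ?_
  simpa using h _ (he.map (IntertwiningMap.equivAlgEnd (ρ := ρ)).symm)

lemma exists_comp_apply_comp_ne_zero [Monoid G] {U U' : Type*} [AddCommGroup U] [Module k U]
    [AddCommGroup U'] [Module k U'] (ρ : Representation k G V) [IsIrreducible ρ]
    {f : U →ₗ[k] V} (hf : f ≠ 0) {T : V →ₗ[k] U'} (hT : T ≠ 0) : ∃ g, T ∘ₗ ρ g ∘ₗ f ≠ 0 := by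
  by_contra! hTf
  let K : Subrepresentation ρ :=
    { toSubmodule := ⨅ g, LinearMap.ker (T ∘ₗ ρ g)
      apply_mem_toSubmodule g v hv := by
        simp only [Submodule.mem_iInf, LinearMap.mem_ker, LinearMap.comp_apply] at hv ⊢
        exact fun g' ↦ by simpa using hv (g' * g) }
  have mem_K (v : V) : v ∈ K ↔ ∀ g, T (ρ g v) = 0 := by
    change v ∈ ⨅ g, LinearMap.ker (T ∘ₗ ρ g) ↔ _
    simp
  rcases eq_bot_or_eq_top K with hK | hK
  · refine hf (LinearMap.ext fun u ↦ ?_)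
    have : f u ∈ K := (mem_K _).2 fun g ↦ LinearMap.congr_fun (hTf g) u
    rw [hK] at this
    exact this
  · refine hT (LinearMap.ext fun v ↦ ?_)
    have : v ∈ K := hK ▸ Submodule.mem_top
    simpa using (mem_K v).1 this 1

lemma exists_intertwiningMap_comp_eq [Monoid G] {U U' : Type*} [AddCommGroup U] [Module k U]
    [AddCommGroup U'] [Module k U'] {ρ : Representation k G U} {σ : Representation k G V}
    {τ : Representation k G U'} [IsSemisimpleRepresentation σ] {f : IntertwiningMap ρ σ}
    (hf : Function.Injective f) (g : IntertwiningMap ρ τ) :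
    ∃ p : IntertwiningMap σ τ, p.comp f = g := by
  have := (isSemisimpleRepresentation_iff_isSemisimpleModule_asModule σ).1 ‹_›
  obtain ⟨p, hp⟩ := IsSemisimpleModule.extension_property
    (IntertwiningMap.equivLinearMapAsModule ρ σ f) hf (IntertwiningMap.equivLinearMapAsModule ρ τ g)
  exact ⟨(IntertwiningMap.equivLinearMapAsModule σ τ).symm p, by ext u; exact congr($hp u)⟩

lemma nontrivial_of_isIrreducible [Monoid G] (ρ : Representation k G V) [IsIrreducible ρ] :
    Nontrivial V :=
  IsSimpleModule.nontrivial (MonoidAlgebra k G) ρ.asModule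

end Irreducibility

section FDRep

universe u v
variable {k : Type u} [Field k] {G : Type v} [Monoid G]

lemma isIrreducible_of_simple (V : FDRep k G) [Simple V] : IsIrreducible V.ρ where
  exists_pair_ne := by
    refine ⟨⊥, ⊤, fun h ↦ id_nonzero V ?_⟩
    ext v
    have : v ∈ (⊥ : Subrepresentation V.ρ) := h ▸ Submodule.mem_top
    exact this
  eq_bot_or_eq_top S := by
    let i : FDRep.of S.toRepresentation ⟶ V :=
      ⟨FGModuleCat.ofHom S.toSubmodule.subtype, fun g ↦ by ext; rfl⟩
    have : Mono i := ConcreteCategory.mono_of_injective i Subtype.val_injective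
    by_cases hi : i = 0
    · left
      rw [eq_bot_iff]
      intro v hv
      exact congr($(hi).hom.hom.hom ⟨v, hv⟩)
    · right
      have := isIso_of_mono_of_nonzero hi
      rw [eq_top_iff]
      intro v _
      obtain ⟨w, hw⟩ := (FDRep.isoToLinearEquiv (asIso i)).surjective v
      exact hw ▸ w.2

lemma simple_of_isIrreducible (V : FDRep k G) [IsIrreducible V.ρ] : Simple V where
  mono_isIso_iff_nonzero {Y} f _ := by
    constructor
    · rintro _ rfl
      have := nontrivial_of_isIrreducible V.ρ
      obtain ⟨v, hv⟩ := exists_ne (0 : V)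
      have id_eq_zero : 𝟙 V = 0 := by rw [← IsIso.inv_hom_id (0 : Y ⟶ V), Limits.comp_zero]
      exact hv congr($(id_eq_zero).hom.hom.hom v)
    · intro hf
      let F : IntertwiningMap Y.ρ V.ρ := ⟨f.hom.hom.hom, fun g ↦ congr($(f.comm g).hom.hom)⟩
      have hF : F ≠ 0 := fun h ↦ hf (by ext v; exact congr($h v))
      have : Epi f := ConcreteCategory.epi_of_surjective f
        ((IsIrreducible.surjective_or_eq_zero F).resolve_right hF)
      exact isIso_of_mono_of_epi f

lemma isIrrChar_of_isIrreducible {G V : Type} [Group G] [AddCommGroup V] [Module ℂ V]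
    [FiniteDimensional ℂ V] (ρ : Representation ℂ G V) [IsIrreducible ρ] :
    IsIrrChar G ρ.character :=
  have : IsIrreducible (FDRep.of ρ).ρ := ‹IsIrreducible ρ›
  ⟨FDRep.of ρ, simple_of_isIrreducible _, rfl⟩

end FDRep

section Coinduction

variable {k G W : Type*} [CommRing k] [Group G] [AddCommGroup W] [Module k W]
  {H : Subgroup G} [DecidablePred (· ∈ H)]

/-- The extension by zero of an orbit map `h ↦ σ h w` to `G`; this is the unit at `w` of the
adjunction exhibiting coinduction from a finite-index subgroup as a left adjoint of restriction. -/
def coindSingle (σ : Representation k H W) : W →ₗ[k] coindV H.subtype σ :=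
  (LinearMap.pi fun g : G ↦ if hg : g ∈ H then σ ⟨g, hg⟩ else 0).codRestrict _ fun w h g ↦ by
    by_cases hg : g ∈ H
    · have hhg : (h : G) * g ∈ H := H.mul_mem h.2 hg
      simp only [LinearMap.pi_apply, Subgroup.subtype_apply, hg, hhg, dif_pos]
      exact congr($(map_mul σ h ⟨g, hg⟩) w)
    · have hhg : (h : G) * g ∉ H := by rwa [H.mul_mem_cancel_left h.2]
      simp [hg, hhg]

variable (σ : Representation k H W)

lemma coindSingle_apply_of_mem {g : G} (hg : g ∈ H) (w : W) :
    (coindSingle σ w : G → W) g = σ ⟨g, hg⟩ w := by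
  change (if hg : g ∈ H then σ ⟨g, hg⟩ else 0) w = _
  rw [dif_pos hg]

lemma coindSingle_apply_of_notMem {g : G} (hg : g ∉ H) (w : W) :
    (coindSingle σ w : G → W) g = 0 := by
  change (if hg : g ∈ H then σ ⟨g, hg⟩ else 0) w = _
  rw [dif_neg hg, LinearMap.zero_apply]

lemma coindSingle_apply_one (w : W) : (coindSingle σ w : G → W) 1 = w := by
  rw [coindSingle_apply_of_mem σ H.one_mem]
  exact congr($(map_one σ) w)

lemma coindSingle_map (h : H) (w : W) :
    coindSingle σ (σ h w) = coind H.subtype σ h (coindSingle σ w) := by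
  ext g
  change _ = (coindSingle σ w : G → W) (g * h)
  by_cases hg : g ∈ H
  · rw [coindSingle_apply_of_mem σ hg, coindSingle_apply_of_mem σ (H.mul_mem hg h.2)]
    exact congr($(map_mul σ ⟨g, hg⟩ h) w).symm
  · rw [coindSingle_apply_of_notMem σ hg,
      coindSingle_apply_of_notMem σ (by rwa [H.mul_mem_cancel_right h.2])]

/-- Evaluation at `g` of the functions underlying a coinduced representation. -/
def coindEval (g : G) : coindV H.subtype σ →ₗ[k] W :=
  LinearMap.proj g ∘ₗ (coindV H.subtype σ).subtype

lemma sum_coind_coindSingle_coindEval [Fintype G] :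
    ∑ x : G, coind H.subtype σ x ∘ₗ coindSingle σ ∘ₗ coindEval σ x⁻¹ = (Nat.card H : k) • 1 := by
  ext f g
  have summand (x : G) :
      (coindSingle σ (f.1 x⁻¹) : G → W) (g * x) = if g * x ∈ H then f.1 g else 0 := by
    split_ifs with hgx
    · rw [coindSingle_apply_of_mem σ hgx, ← f.2 ⟨g * x, hgx⟩ x⁻¹]
      simp
    · exact coindSingle_apply_of_notMem σ hgx _
  simp only [LinearMap.sum_apply, Submodule.coe_sum, Finset.sum_apply]
  calc ∑ x, (coindSingle σ (f.1 x⁻¹) : G → W) (g * x)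
      = ∑ x, if x ∈ H then f.1 g else 0 := by
        simp only [summand]
        exact Equiv.sum_comp (Equiv.mulLeft g) fun x ↦ if x ∈ H then f.1 g else 0
    _ = (Nat.card H : k) • f.1 g := by
        rw [← Finset.sum_filter, Finset.sum_const, Nat.cast_smul_eq_nsmul,
          Nat.card_eq_fintype_card, Fintype.card_subtype]

end Coinduction

section CoinductionOverField

variable {k G W : Type*} [Field k] [Group G] [AddCommGroup W] [Module k W]
  {H : Subgroup G} [DecidablePred (· ∈ H)] (σ : Representation k H W)

lemma trace_coindEval_comp_coindSingle (g : G) :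
    LinearMap.trace k W (coindEval σ g ∘ₗ coindSingle σ) =
      if hg : g ∈ H then σ.character ⟨g, hg⟩ else 0 := by
  split_ifs with hg
  · exact congr(LinearMap.trace k W $(LinearMap.ext (coindSingle_apply_of_mem σ hg)))
  · rw [← map_zero (LinearMap.trace k W)]
    exact congr(LinearMap.trace k W $(LinearMap.ext (coindSingle_apply_of_notMem σ hg)))

lemma character_coind [Fintype G] [NeZero (Nat.card H : k)] [FiniteDimensional k W] (g : G) :
    (coind H.subtype σ).character g = (Nat.card H : k)⁻¹ *
      ∑ x : G, if h : x⁻¹ * g * x ∈ H then σ.character ⟨x⁻¹ * g * x, h⟩ else 0 := by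
  rw [eq_inv_mul_iff_mul_eq₀ (NeZero.ne _)]
  calc (Nat.card H : k) * (coind H.subtype σ).character g
      = LinearMap.trace k _ (coind H.subtype σ g * ((Nat.card H : k) • 1)) := by
        rw [mul_smul_comm, mul_one, map_smul, smul_eq_mul]
        rfl
    _ = ∑ x, LinearMap.trace k _
          ((coind H.subtype σ g ∘ₗ coind H.subtype σ x ∘ₗ coindSingle σ) ∘ₗ coindEval σ x⁻¹) := by
        rw [← sum_coind_coindSingle_coindEval σ, Finset.mul_sum, map_sum]
        rfl
    _ = ∑ x, LinearMap.trace k W (coindEval σ (x⁻¹ * g * x) ∘ₗ coindSingle σ) := by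
        refine Finset.sum_congr rfl fun x _ ↦ ?_
        rw [LinearMap.trace_comp_comm']
        rfl
    _ = _ := Finset.sum_congr rfl fun x _ ↦ trace_coindEval_comp_coindSingle σ _

variable {σ} in
lemma intertwiningMap_coind_ext [Finite G] [NeZero (Nat.card H : k)] {V : Type*} [AddCommGroup V]
    [Module k V] {τ : Representation k G V} {L L' : IntertwiningMap (coind H.subtype σ) τ}
    (hL : ∀ w, L (coindSingle σ w) = L' (coindSingle σ w)) : L = L' := by
  have := Fintype.ofFinite G
  ext f
  refine smul_right_injective V (NeZero.ne (Nat.card H : k)) ?_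
  have expand (M : IntertwiningMap (coind H.subtype σ) τ) :
      (Nat.card H : k) • M f = ∑ x : G, τ x (M (coindSingle σ (coindEval σ x⁻¹ f))) := by
    have hf := LinearMap.congr_fun (sum_coind_coindSingle_coindEval σ) f
    simp only [LinearMap.sum_apply, LinearMap.smul_apply, Module.End.one_apply] at hf
    rw [← map_smul, ← hf, map_sum]
    exact Finset.sum_congr rfl fun x _ ↦ IntertwiningMap.isIntertwining _ _ M x _
  change (Nat.card H : k) • L f = (Nat.card H : k) • L' f
  simp only [expand, hL]

end CoinductionOverField

section ConjIntertwining

variable {k G : Type*} [CommRing k] [Group G]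

lemma neZero_card_subgroup [NeZero (Nat.card G : k)] (H : Subgroup G) : NeZero (Nat.card H : k) :=
  ⟨ne_zero_of_dvd_ne_zero (NeZero.ne (Nat.card G : k))
    (Nat.cast_dvd_cast H.card_subgroup_dvd_card)⟩

/-- `T` intertwines `σ` with the restriction of `τ` along conjugation by `x`, on the elements of `H`
that conjugation by `x` maps into `K`. Writing conjugation as `x * h = l * x` avoids transporting
either representation. -/
def IsConjIntertwining {H K : Subgroup G} {V W : Type*} [AddCommGroup V] [Module k V]
    [AddCommGroup W] [Module k W] (σ : Representation k H V) (τ : Representation k K W) (x : G)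
    (T : V →ₗ[k] W) : Prop :=
  ∀ (h : H) (l : K), x * h = l * x → T ∘ₗ σ h = τ l ∘ₗ T

namespace IsConjIntertwining

variable {H K L : Subgroup G} {U V W : Type*} [AddCommGroup U] [Module k U] [AddCommGroup V]
  [Module k V] [AddCommGroup W] [Module k W] {σ : Representation k H U} {τ : Representation k K V}
  {υ : Representation k L W}

lemma comp {x y : G} {S : V →ₗ[k] W} {T : U →ₗ[k] V} (hS : IsConjIntertwining τ υ y S)
    (hT : IsConjIntertwining σ τ x T) (hx : ∀ h ∈ H, x * h * x⁻¹ ∈ K) :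
    IsConjIntertwining σ υ (y * x) (S ∘ₗ T) := fun h l hl ↦ by
  have hlx : y * (x * h * x⁻¹) = l * y := by
    rw [← mul_inv_eq_iff_eq_mul.2 hl]
    group
  rw [LinearMap.comp_assoc, hT h ⟨x * h * x⁻¹, hx h h.2⟩ (by simp), ← LinearMap.comp_assoc,
    hS _ l hlx, LinearMap.comp_assoc]

lemma self_apply (h : H) : IsConjIntertwining σ σ h (σ h) := fun m l hml ↦ by
  rw [← Module.End.mul_eq_comp, ← Module.End.mul_eq_comp, ← map_mul, ← map_mul]
  exact congr(σ $(Subtype.ext hml))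

lemma of_intertwiningMap_res (hHK : H ≤ K)
    (f : IntertwiningMap σ (τ.comp (Subgroup.inclusion hHK))) :
    IsConjIntertwining σ τ 1 f.toLinearMap := fun h l hl ↦ by
  obtain rfl : Subgroup.inclusion hHK h = l := Subtype.ext (by simpa using hl)
  exact f.isIntertwining' h

lemma of_intertwiningMap_of_res (hHK : H ≤ K)
    (p : IntertwiningMap (τ.comp (Subgroup.inclusion hHK)) σ) :
    IsConjIntertwining τ σ 1 p.toLinearMap := fun l h hl ↦ by
  obtain rfl : Subgroup.inclusion hHK h = l := Subtype.ext (by simpa using hl.symm)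
  exact p.isIntertwining' h

lemma coindEval_comp_coindSingle [DecidablePred (· ∈ H)]
    (L : IntertwiningMap (coind H.subtype σ) (coind H.subtype σ)) (x : G) :
    IsConjIntertwining σ σ x (coindEval σ x ∘ₗ L.toLinearMap ∘ₗ coindSingle σ) :=
  fun h l hl ↦ LinearMap.ext fun u ↦ calc
    (L (coindSingle σ (σ h u))).1 x
      = (L (coindSingle σ u)).1 (x * h) := by
        rw [coindSingle_map, IntertwiningMap.isIntertwining]
        rfl
    _ = σ l ((L (coindSingle σ u)).1 x) := by
        rw [hl]
        exact (L (coindSingle σ u)).2 l x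

end IsConjIntertwining

lemma intertwiningMap_apply_coindSingle {H : Subgroup G} [DecidablePred (· ∈ H)] {W : Type*}
    [AddCommGroup W] [Module k W] {σ : Representation k H W}
    (hσ : ∀ x ∉ H, ∀ T : W →ₗ[k] W, IsConjIntertwining σ σ x T → T = 0)
    (L : IntertwiningMap (coind H.subtype σ) (coind H.subtype σ)) (w : W) :
    L (coindSingle σ w) = coindSingle σ ((L (coindSingle σ w)).1 1) := by
  ext g
  by_cases hg : g ∈ H
  · rw [coindSingle_apply_of_mem σ hg, ← (L (coindSingle σ w)).2 ⟨g, hg⟩ 1]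
    simp
  · rw [coindSingle_apply_of_notMem σ hg]
    exact LinearMap.congr_fun (hσ g hg _ (.coindEval_comp_coindSingle L g)) w

end ConjIntertwining

theorem isIrreducible_coind_of_conj_disjoint {k G W : Type*} [Field k] [Group G] [Finite G]
    [NeZero (Nat.card G : k)] [AddCommGroup W] [Module k W] {H : Subgroup G}
    {σ : Representation k H W} [IsIrreducible σ]
    (hσ : ∀ x ∉ H, ∀ T : W →ₗ[k] W, IsConjIntertwining σ σ x T → T = 0) :
    IsIrreducible (coind H.subtype σ) := by
  classical
  have := neZero_card_subgroup (k := k) H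
  have : Nontrivial W := nontrivial_of_isIrreducible σ
  have : Nontrivial (coindV H.subtype σ) :=
    (show Function.LeftInverse (coindEval σ 1) (coindSingle σ) from
      coindSingle_apply_one σ).injective.nontrivial
  refine isIrreducible_of_idempotents_trivial fun e he ↦ ?_
  let T : IntertwiningMap σ σ :=
    ⟨coindEval σ 1 ∘ₗ e.toLinearMap ∘ₗ coindSingle σ,
      fun h ↦ IsConjIntertwining.coindEval_comp_coindSingle e 1 h h (by simp)⟩
  have e_coindSingle (w : W) : e (coindSingle σ w) = coindSingle σ (T w) :=
    intertwiningMap_apply_coindSingle hσ e w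
  have T_idem (w : W) : T (T w) = T w := calc
    T (T w) = (e (coindSingle σ (T w))).1 1 := rfl
    _ = (e (e (coindSingle σ w))).1 1 := by rw [e_coindSingle w]
    _ = (e (coindSingle σ w)).1 1 := congr(($he (coindSingle σ w)).1 1)
  rcases IsIrreducible.injective_or_eq_zero T with T_inj | T_zero
  · right
    refine intertwiningMap_coind_ext fun w ↦ ?_
    rw [e_coindSingle, T_inj (T_idem w)]
    rfl
  · left
    refine intertwiningMap_coind_ext fun w ↦ ?_
    rw [e_coindSingle, T_zero]
    exact map_zero _

section Clifford

variable {k G X : Type*} [Field k] [Group G] [AddCommGroup X] [Module k X]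
  [FiniteDimensional k X] {N : Subgroup G} [hN : N.Normal] {ρ : Representation k N X}
  [IsIrreducible ρ]

lemma IsConjIntertwining.character_conj_eq {g : G} {F : X →ₗ[k] X}
    (hF : IsConjIntertwining ρ ρ g F) (hF0 : F ≠ 0) (n : N) :
    ρ.character ⟨g * n * g⁻¹, hN.conj_mem n n.2 g⟩ = ρ.character n := by
  let F' : IntertwiningMap ρ (ρ.comp (MulAut.conjNormal g).toMonoidHom) :=
    ⟨F, fun m ↦ hF m (MulAut.conjNormal g m) (by simp)⟩
  have hF' : F' ≠ 0 := fun h ↦ hF0 congr($(h).toLinearMap)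
  have F_injective : Function.Injective F :=
    (IsIrreducible.injective_or_eq_zero F').resolve_right hF'
  let e : X ≃ₗ[k] X := LinearEquiv.ofInjectiveEndo F F_injective
  have conj_eq : ρ ⟨g * n * g⁻¹, hN.conj_mem n n.2 g⟩ = e.conj (ρ n) := by
    rw [LinearEquiv.conj_apply, LinearEquiv.eq_comp_toLinearMap_symm]
    exact (F'.isIntertwining' n).symm
  rw [character, conj_eq, LinearMap.trace_conj', character]

variable {W : Type*} [AddCommGroup W] [Module k W] {H : Subgroup G} {σ : Representation k H W}
  [IsIrreducible σ]

lemma mem_of_isConjIntertwining_ne_zero (hNH : N ≤ H)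
    (hstab : ∀ g : G,
      (∀ n : N, ρ.character ⟨g * n * g⁻¹, hN.conj_mem n n.2 g⟩ = ρ.character n) → g ∈ H)
    {f : IntertwiningMap ρ (σ.comp (Subgroup.inclusion hNH))} (hf : f ≠ 0)
    {p : IntertwiningMap (σ.comp (Subgroup.inclusion hNH)) ρ} (hp : p ≠ 0) {x : G} {T : W →ₗ[k] W}
    (hT : IsConjIntertwining σ σ x T) (hT0 : T ≠ 0) : x ∈ H := by
  have hf' : f.toLinearMap ≠ 0 := fun h ↦ hf (IntertwiningMap.toLinearMap_injective _ _ h)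
  have hp' : p.toLinearMap ≠ 0 := fun h ↦ hp (IntertwiningMap.toLinearMap_injective _ _ h)
  obtain ⟨h, hTf⟩ := exists_comp_apply_comp_ne_zero σ hf' hT0
  obtain ⟨h', hF0⟩ := exists_comp_apply_comp_ne_zero σ hTf hp'
  have conj_mem (y : G) : ∀ n ∈ N, y * n * y⁻¹ ∈ H := fun n hn ↦ hNH (hN.conj_mem n hn y)
  have hF : IsConjIntertwining ρ ρ (1 * (h' * (x * (h * 1))))
      (p.toLinearMap ∘ₗ σ h' ∘ₗ T ∘ₗ σ h ∘ₗ f.toLinearMap) :=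
    .comp (.of_intertwiningMap_of_res hNH p) (.comp (.self_apply h') (.comp hT
      (.comp (.self_apply h) (.of_intertwiningMap_res hNH f) (conj_mem _)) (conj_mem _))
      (conj_mem _)) (conj_mem _)
  have hx := hstab _ (hF.character_conj_eq hF0)
  rwa [one_mul, mul_one, H.mul_mem_cancel_left h'.2, H.mul_mem_cancel_right h.2] at hx

theorem isIrreducible_coind_of_stabilizer_le [Finite G] [NeZero (Nat.card G : k)] (hNH : N ≤ H)
    (hstab : ∀ g : G,
      (∀ n : N, ρ.character ⟨g * n * g⁻¹, hN.conj_mem n n.2 g⟩ = ρ.character n) → g ∈ H)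
    {f : IntertwiningMap ρ (σ.comp (Subgroup.inclusion hNH))} (hf : f ≠ 0) :
    IsIrreducible (coind H.subtype σ) := by
  have := neZero_card_subgroup (k := k) N
  obtain ⟨p, hpf⟩ := exists_intertwiningMap_comp_eq
    ((IsIrreducible.injective_or_eq_zero f).resolve_right hf) (1 : IntertwiningMap ρ ρ)
  have hp : p ≠ 0 := by
    rintro rfl
    have := nontrivial_of_isIrreducible ρ
    obtain ⟨v, hv⟩ := exists_ne (0 : X)
    exact hv congr($hpf v).symm
  refine isIrreducible_coind_of_conj_disjoint fun x hx T hT ↦ ?_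
  contrapose! hx
  exact mem_of_isConjIntertwining_ne_zero hNH hstab hf hp hT hx

end Clifford

section CharacterInner

open scoped ComplexOrder

lemma exists_posDef_conjTranspose_mul_mul_eq {𝕜 G n : Type*} [RCLike 𝕜] [Group G] [Finite G]
    [Fintype n] [DecidableEq n] (M : G →* Matrix n n 𝕜) :
    ∃ Q : Matrix n n 𝕜, Q.PosDef ∧ ∀ g, (M g).conjTranspose * Q * M g = Q := by
  have := Fintype.ofFinite G
  refine ⟨∑ x, (M x).conjTranspose * M x, ?_, fun g ↦ ?_⟩
  · classical
    rw [← Finset.add_sum_erase _ _ (Finset.mem_univ (1 : G)), map_one, Matrix.conjTranspose_one,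
      mul_one]
    exact Matrix.PosDef.one.add_posSemidef
      (Matrix.posSemidef_sum _ fun x _ ↦ Matrix.posSemidef_conjTranspose_mul_self _)
  · simp only [Finset.mul_sum, Finset.sum_mul]
    refine Fintype.sum_equiv (Equiv.mulRight g) _ _ fun x ↦ ?_
    simp [Matrix.conjTranspose_mul, Matrix.mul_assoc]

lemma trace_inv_eq_star_trace {𝕜 G n : Type*} [RCLike 𝕜] [Group G] [Finite G]
    [Fintype n] [DecidableEq n] (M : G →* Matrix n n 𝕜) (g : G) :
    (M g⁻¹).trace = star (M g).trace := by
  obtain ⟨Q, Q_posDef, hQ⟩ := exists_posDef_conjTranspose_mul_mul_eq M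
  have det_Q : IsUnit Q.det := (Matrix.isUnit_iff_isUnit_det _).1 Q_posDef.isUnit
  have M_cancel : M g * M g⁻¹ = 1 := by rw [← map_mul, mul_inv_cancel, map_one]
  calc (M g⁻¹).trace
      = (Q⁻¹ * (Q * M g⁻¹)).trace := by rw [Matrix.nonsing_inv_mul_cancel_left _ _ det_Q]
    _ = (Q⁻¹ * ((M g).conjTranspose * Q)).trace := by
        nth_rw 2 [← hQ g]
        rw [Matrix.mul_assoc _ (M g), M_cancel, Matrix.mul_one]
    _ = (M g).conjTranspose.trace := by
        rw [Matrix.trace_mul_comm, Matrix.mul_nonsing_inv_cancel_right _ _ det_Q]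
    _ = star (M g).trace := Matrix.trace_conjTranspose _

lemma character_inv_eq_conj {𝕜 G V : Type*} [RCLike 𝕜] [Group G] [Finite G] [AddCommGroup V]
    [Module 𝕜 V] [FiniteDimensional 𝕜 V] (ρ : Representation 𝕜 G V) (g : G) :
    ρ.character g⁻¹ = starRingEnd 𝕜 (ρ.character g) := by
  let b := Module.finBasis 𝕜 V
  simp only [character, LinearMap.trace_eq_matrix_trace 𝕜 b]
  exact trace_inv_eq_star_trace ((LinearMap.toMatrixAlgEquiv b).toMulEquiv.toMonoidHom.comp ρ) g

lemma classInner_character {G V W : Type*} [Group G] [Fintype G] [AddCommGroup V] [Module ℂ V]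
    [FiniteDimensional ℂ V] [AddCommGroup W] [Module ℂ W] [FiniteDimensional ℂ W]
    (ρ : Representation ℂ G V) (τ : Representation ℂ G W) :
    classInner G τ.character ρ.character = Module.finrank ℂ (IntertwiningMap ρ τ) := by
  have := invertibleOfNonzero (NeZero.ne (Nat.card G : ℂ))
  simp only [← card_inv_mul_sum_char_mul_char_eq_finrank, character_inv_eq_conj, classInner,
    Nat.card_eq_fintype_card]

end CharacterInner

/-- **Clifford correspondence.**  Let `G` be a finite group, `N ⊴ G`, `χ` an irreducible
character of `N`, and `H` any subgroup of `G` containing the inertia group `I_G(χ)`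
(in particular `H = I_G(χ)` itself).  If `ψ` is an irreducible character of `H` lying
over `χ` (e.g. an irreducible constituent of `χ↑^H` lying over `χ`), then `ψ↑^G` is an
irreducible character of `G`. -/
theorem stmt_18 {G : Type} [Group G] [Fintype G]
    (N : Subgroup G) [DecidablePred (· ∈ N)] (hN : N.Normal)
    (χ : ↥N → ℂ) (hχ : IsIrrChar ↥N χ)
    (H : Subgroup G) [DecidablePred (· ∈ H)] (hNH : N ≤ H)
    -- `H` contains the inertia group `I_G(χ)`:
    (hstab : ∀ g : G,
      (∀ n : ↥N, χ ⟨g * ↑n * g⁻¹, hN.conj_mem ↑n n.2 g⟩ = χ n) → g ∈ H)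
    (ψ : ↥H → ℂ) (hψ : IsIrrChar ↥H ψ)
    -- `ψ` lies over `χ`, i.e. `⟨ψ↓_N, χ⟩_N ≠ 0`:
    (hover : classInner ↥N (fun n : ↥N => ψ ⟨↑n, hNH n.2⟩) χ ≠ 0) :
    IsIrrChar G (indChar H ψ) := by
  obtain ⟨X, _, rfl⟩ := hχ
  obtain ⟨W, _, rfl⟩ := hψ
  have := isIrreducible_of_simple X
  have := isIrreducible_of_simple W
  have finrank_ne_zero :
      Module.finrank ℂ (IntertwiningMap X.ρ (W.ρ.comp (Subgroup.inclusion hNH))) ≠ 0 := by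
    rw [← Nat.cast_ne_zero (R := ℂ), ← classInner_character]
    exact hover
  obtain ⟨f, hf⟩ := (Module.finrank_pos_iff_exists_ne_zero (R := ℂ)).1
    (Nat.pos_of_ne_zero finrank_ne_zero)
  have : IsIrreducible (coind H.subtype W.ρ) := isIrreducible_coind_of_stabilizer_le hNH hstab hf
  have character_eq : (coind H.subtype W.ρ).character = indChar H W.character :=
    funext (character_coind W.ρ)
  exact character_eq ▸ isIrrChar_of_isIrreducible (coind H.subtype W.ρ)
end
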